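/- arXiv:1604.01283 — 2 statements merged into one kernel-verified Lean document; each statement's English description precedes it below -/
import Mathlib

section
/- Let A be a ring such that the finitely presented right A-modules form an abelian category. Then every non-zero subadditive function χ on the finitely presented A-modules can be written as a finite sum χ = χ_1 + ⋯ + χ_n of irreducible subadditive functions, and this decomposition is unique up to reordering. -/
/-- The composition length of a module (the length of a composition series,
zero if none exists). -/
noncomputable def compLength (R : Type) [Ring R] (M : Type) [AddCommGroup M] [Module R M] : ℕ := by
  classical
  exact if h : ∃ s : CompositionSeries (Submodule R M), s.head = ⊥ ∧ s.last = ⊤ then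
    h.choose.length else 0

/-- A module `M` is endofinite if it has finite composition length over its
endomorphism ring, which acts on `M` by application. -/
def IsEndofinite (A : Type) [Ring A] (M : Type) [AddCommGroup M] [Module A M] : Prop :=
  IsFiniteLength (Module.End A M) M

/-- The subadditive function `χ_M` associated to a module `M`:
`χ_M(X) = ℓ_{End_A(M)} Hom_A(X, M)`, where `End_A(M)` acts by postcomposition. -/
noncomputable def chiMod (A : Type) [Ring A] (M : Type) [AddCommGroup M] [Module A M]
    (X : Type) [AddCommGroup X] [Module A X] : ℕ :=
  compLength (Module.End A M) (X →ₗ[A] M)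

/-- A subadditive function on the finitely presented `A`-modules: it depends only on
the isomorphism class, is additive on direct sums, and satisfies
`χ(X) + χ(Z) ≥ χ(Y)` for every exact sequence `X → Y → Z → 0`. -/
def IsSubadditive (A : Type) [Ring A]
    (χ : (X : Type) → [AddCommGroup X] → [Module A X] → ℕ) : Prop :=
  (∀ (X Y : Type) [AddCommGroup X] [Module A X] [AddCommGroup Y] [Module A Y],
      Module.FinitePresentation A X → Module.FinitePresentation A Y →
      (X ≃ₗ[A] Y) → χ X = χ Y) ∧
  (∀ (X Y : Type) [AddCommGroup X] [Module A X] [AddCommGroup Y] [Module A Y],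
      Module.FinitePresentation A X → Module.FinitePresentation A Y →
      χ (X × Y) = χ X + χ Y) ∧
  (∀ (X Y Z : Type) [AddCommGroup X] [Module A X] [AddCommGroup Y] [Module A Y]
      [AddCommGroup Z] [Module A Z],
      Module.FinitePresentation A X → Module.FinitePresentation A Y →
      Module.FinitePresentation A Z →
      ∀ (f : X →ₗ[A] Y) (g : Y →ₗ[A] Z),
      Function.Exact f g → Function.Surjective g → χ Y ≤ χ X + χ Z)

/-- Membership in the additive locus `Adloc(χ)`: `Z` is finitely presented and
`χ(X) - χ(Y) + χ(Z) = 0` for every short exact sequence `0 → X → Y → Z → 0` of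
finitely presented modules. -/
def MemAdloc (A : Type) [Ring A]
    (χ : (X : Type) → [AddCommGroup X] → [Module A X] → ℕ)
    (Z : Type) [AddCommGroup Z] [Module A Z] : Prop :=
  Module.FinitePresentation A Z ∧
  ∀ (X Y : Type) [AddCommGroup X] [Module A X] [AddCommGroup Y] [Module A Y],
    Module.FinitePresentation A X → Module.FinitePresentation A Y →
    ∀ (f : X →ₗ[A] Y) (g : Y →ₗ[A] Z),
    Function.Injective f → Function.Exact f g → Function.Surjective g →
    χ X + χ Z = χ Y

/-- The hypothesis that the finitely presented `A`-modules form an abelian category: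
kernels of maps between finitely presented modules are finitely presented. -/
def FpAbelian (A : Type) [Ring A] : Prop :=
  ∀ (X Y : Type) [AddCommGroup X] [Module A X] [AddCommGroup Y] [Module A Y],
    Module.FinitePresentation A X → Module.FinitePresentation A Y →
    ∀ f : X →ₗ[A] Y, Module.FinitePresentation A (LinearMap.ker f)

/-- Two functions agree on all finitely presented `A`-modules. -/
def FpEq (A : Type) [Ring A]
    (χ χ' : (X : Type) → [AddCommGroup X] → [Module A X] → ℕ) : Prop :=
  ∀ (X : Type) [AddCommGroup X] [Module A X], Module.FinitePresentation A X → χ X = χ' X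

/-- A function is non-zero on the finitely presented `A`-modules. -/
def FpNonzero (A : Type) [Ring A]
    (χ : (X : Type) → [AddCommGroup X] → [Module A X] → ℕ) : Prop :=
  ∃ (X : Type) (_ : AddCommGroup X) (_ : Module A X),
    Module.FinitePresentation A X ∧ χ X ≠ 0

/-- A subadditive function is irreducible if it is non-zero and is not the sum of two
non-zero subadditive functions. -/
def IsIrreducibleSubadditive (A : Type) [Ring A]
    (χ : (X : Type) → [AddCommGroup X] → [Module A X] → ℕ) : Prop :=
  IsSubadditive A χ ∧ FpNonzero A χ ∧
  ¬ ∃ χ₁ χ₂ : (X : Type) → [AddCommGroup X] → [Module A X] → ℕ,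
      IsSubadditive A χ₁ ∧ IsSubadditive A χ₂ ∧ FpNonzero A χ₁ ∧ FpNonzero A χ₂ ∧
      FpEq A χ (fun X _ _ => χ₁ X + χ₂ X)

/-!
The finitely generated subfunctors of `Hom_A(X, -)` form a modular lattice, on which `χ` induces a
length: the image of `Hom_A(f, -)`, for `f : X → Y`, has length `χ Y - χ (coker f)`. Given two
subadditive functions, take the infimum of the two lengths among interval functions rather than
pointwise. By modularity it is again additive on concatenated intervals, and its total value over
the subfunctors of `Hom_A(X, -)` is a subadditive function of `X`, a common summand `inf p a` of
`p` and `a`. If `p` is a summand of `a + b`, then `p ≤ inf p a + inf p b`. For irreducible `p` each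
infimum is either `p` or zero, so `p` is a summand of `a` or of `b`: irreducible subadditive
functions are prime, which gives uniqueness. Existence is by induction on `χ A`, which is positive
as soon as `χ` is non-zero.
-/

section IntervalInf

variable {L M : Type*}

section Preorder

variable [Preorder L] [Preorder M] {v w : L →o ℤ} {a b c : L} {k : ℤ}

/-- A function `δ` of the subintervals of `[a, b]` which is subadditive under concatenation and
bounded by the increments of both `v` and `w`. -/
structure IsCommonMinorant (v w : L →o ℤ) (a b : L) (δ : L → L → ℤ) : Prop where
  triangle : ∀ ⦃x y z⦄, a ≤ x → x ≤ y → y ≤ z → z ≤ b → δ x z ≤ δ x y + δ y z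
  le_left : ∀ ⦃x y⦄, a ≤ x → x ≤ y → y ≤ b → δ x y ≤ v y - v x
  le_right : ∀ ⦃x y⦄, a ≤ x → x ≤ y → y ≤ b → δ x y ≤ w y - w x

theorem IsCommonMinorant.mono {δ : L → L → ℤ} {a' b' : L} (h : IsCommonMinorant v w a b δ)
    (ha : a ≤ a') (hb : b' ≤ b) : IsCommonMinorant v w a' b' δ where
  triangle _ _ _ hx hxy hyz hz := h.triangle (ha.trans hx) hxy hyz (hz.trans hb)
  le_left _ _ hx hxy hy := h.le_left (ha.trans hx) hxy (hy.trans hb)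
  le_right _ _ hx hxy hy := h.le_right (ha.trans hx) hxy (hy.trans hb)

theorem IsCommonMinorant.symm {δ : L → L → ℤ} (h : IsCommonMinorant v w a b δ) :
    IsCommonMinorant w v a b δ :=
  ⟨h.triangle, h.le_right, h.le_left⟩

theorem isCommonMinorant_zero (v w : L →o ℤ) (a b : L) :
    IsCommonMinorant v w a b fun _ _ ↦ 0 where
  triangle _ _ _ _ _ _ _ := le_rfl
  le_left _ _ _ hxy _ := sub_nonneg.2 (v.monotone hxy)
  le_right _ _ _ hxy _ := sub_nonneg.2 (w.monotone hxy)

/-- The infimum of the increments of `v` and `w` over the interval `[a, b]`, among interval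
functions: the largest value taken on `[a, b]` by a common minorant. Equivalently, it is the minimum
over all chains from `a` to `b` of the sum over the steps of the smaller of the two increments. -/
noncomputable def intervalInf (v w : L →o ℤ) (a b : L) : ℤ :=
  sSup {k | ∃ δ, IsCommonMinorant v w a b δ ∧ δ a b = k}

theorem intervalInf_le (h : ∀ δ, IsCommonMinorant v w a b δ → δ a b ≤ k) :
    intervalInf v w a b ≤ k := by
  refine csSup_le ⟨0, _, isCommonMinorant_zero v w a b, rfl⟩ ?_
  rintro _ ⟨δ, hδ, rfl⟩
  exact h δ hδ

theorem IsCommonMinorant.le_intervalInf {δ : L → L → ℤ} (hδ : IsCommonMinorant v w a b δ)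
    (hab : a ≤ b) : δ a b ≤ intervalInf v w a b := by
  refine le_csSup ⟨v b - v a, ?_⟩ ⟨δ, hδ, rfl⟩
  rintro _ ⟨ε, hε, rfl⟩
  exact hε.le_left le_rfl hab le_rfl

theorem intervalInf_comm (v w : L →o ℤ) (a b : L) : intervalInf v w a b = intervalInf w v a b :=
  congrArg sSup <| Set.ext fun _ ↦
    exists_congr fun _ ↦ and_congr_left' ⟨IsCommonMinorant.symm, IsCommonMinorant.symm⟩

theorem intervalInf_nonneg (hab : a ≤ b) : 0 ≤ intervalInf v w a b :=
  (isCommonMinorant_zero v w a b).le_intervalInf hab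

theorem intervalInf_le_left (hab : a ≤ b) : intervalInf v w a b ≤ v b - v a :=
  intervalInf_le fun _ hδ ↦ hδ.le_left le_rfl hab le_rfl

theorem intervalInf_le_right (hab : a ≤ b) : intervalInf v w a b ≤ w b - w a :=
  intervalInf_le fun _ hδ ↦ hδ.le_right le_rfl hab le_rfl

theorem intervalInf_self (v w : L →o ℤ) (a : L) : intervalInf v w a a = 0 :=
  le_antisymm ((intervalInf_le_left le_rfl).trans_eq (sub_self _)) (intervalInf_nonneg le_rfl)

theorem intervalInf_triangle (hab : a ≤ b) (hbc : b ≤ c) :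
    intervalInf v w a c ≤ intervalInf v w a b + intervalInf v w b c :=
  intervalInf_le fun _ hδ ↦ (hδ.triangle le_rfl hab hbc le_rfl).trans <|
    add_le_add ((hδ.mono le_rfl hbc).le_intervalInf hab) ((hδ.mono hab le_rfl).le_intervalInf hbc)

theorem intervalInf_map_le {v' w' : M →o ℤ} (F : L →o M) (hab : a ≤ b)
    (hv : ∀ ⦃x y⦄, a ≤ x → x ≤ y → y ≤ b → v' (F y) - v' (F x) ≤ v y - v x)
    (hw : ∀ ⦃x y⦄, a ≤ x → x ≤ y → y ≤ b → w' (F y) - w' (F x) ≤ w y - w x) :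
    intervalInf v' w' (F a) (F b) ≤ intervalInf v w a b := by
  have hF : IsCommonMinorant v w a b fun x y ↦ intervalInf v' w' (F x) (F y) :=
    { triangle _ _ _ _ hxy hyz _ := intervalInf_triangle (F.monotone hxy) (F.monotone hyz)
      le_left _ _ hx hxy hy := (intervalInf_le_left (F.monotone hxy)).trans (hv hx hxy hy)
      le_right _ _ hx hxy hy := (intervalInf_le_right (F.monotone hxy)).trans (hw hx hxy hy) }
  exact hF.le_intervalInf hab

end Preorder

section Lattice

variable [Lattice L] {v w : L →o ℤ} {a b c : L}

/-- `v` is a valuation of the lattice: it satisfies inclusion-exclusion. -/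
def IsModularValuation (v : L →o ℤ) : Prop :=
  ∀ a b, v (a ⊔ b) + v (a ⊓ b) = v a + v b

/-- By modularity, an increment is the sum of its parts below and above `b`, so summing the
infima over `[x ⊓ b, y ⊓ b]` and `[x ⊔ b, y ⊔ b]` gives a common minorant. -/
theorem intervalInf_add (hv : IsModularValuation v) (hw : IsModularValuation w) (hab : a ≤ b)
    (hbc : b ≤ c) : intervalInf v w a b + intervalInf v w b c = intervalInf v w a c := by
  refine le_antisymm ?_ (intervalInf_triangle hab hbc)
  have split_minorant : IsCommonMinorant v w a c fun x y ↦
      intervalInf v w (x ⊓ b) (y ⊓ b) + intervalInf v w (x ⊔ b) (y ⊔ b) :=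
    { triangle x y z _ hxy hyz _ := by
        have hinf := intervalInf_triangle (v := v) (w := w) (inf_le_inf_right b hxy)
          (inf_le_inf_right b hyz)
        have hsup := intervalInf_triangle (v := v) (w := w) (sup_le_sup_right hxy b)
          (sup_le_sup_right hyz b)
        linarith
      le_left x y _ hxy _ := by
        have hinf := intervalInf_le_left (v := v) (w := w) (inf_le_inf_right b hxy)
        have hsup := intervalInf_le_left (v := v) (w := w) (sup_le_sup_right hxy b)
        linarith [hv x b, hv y b]
      le_right x y _ hxy _ := by
        have hinf := intervalInf_le_right (v := v) (w := w) (inf_le_inf_right b hxy)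
        have hsup := intervalInf_le_right (v := v) (w := w) (sup_le_sup_right hxy b)
        linarith [hw x b, hw y b] }
  simpa [hab, hbc] using split_minorant.le_intervalInf (hab.trans hbc)

theorem sub_le_intervalInf_add_intervalInf {u : L →o ℤ} (hu : IsModularValuation u)
    (hw : IsModularValuation w)
    (h : ∀ ⦃x y⦄, x ≤ y → u y - u x ≤ (v y - v x) + (w y - w x)) (hab : a ≤ b) :
    u b - u a ≤ intervalInf u v a b + intervalInf u w a b := by
  have le_increment_add : ∀ ⦃x y⦄, x ≤ y → u y - u x ≤ (v y - v x) + intervalInf u w x y := by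
    intro x y hxy
    have : IsCommonMinorant u w x y fun s t ↦ (u t - u s) - (v t - v s) :=
      { triangle _ _ _ _ _ _ _ := by linarith
        le_left _ _ _ hst _ := by linarith [v.monotone hst]
        le_right _ _ _ hst _ := by linarith [h hst] }
    linarith [this.le_intervalInf hxy]
  have : IsCommonMinorant u v a b fun x y ↦ (u y - u x) - intervalInf u w x y :=
    { triangle _ _ _ _ hxy hyz _ := by linarith [intervalInf_add hu hw hxy hyz]
      le_left _ _ _ hxy _ := by linarith [intervalInf_nonneg (v := u) (w := w) hxy]
      le_right _ _ _ hxy _ := by linarith [le_increment_add hxy] }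
  linarith [this.le_intervalInf hab]

end Lattice

end IntervalInf

section Cokernel

open LinearMap

variable {A X Y Z W : Type*} [Ring A] [AddCommGroup X] [Module A X] [AddCommGroup Y] [Module A Y]
  [AddCommGroup Z] [Module A Z] [AddCommGroup W] [Module A W]

instance finitePresentation_quotient_range [Module.Finite A X] [Module.FinitePresentation A Y]
    (f : X →ₗ[A] Y) : Module.FinitePresentation A (Y ⧸ range f) := by
  refine Module.finitePresentation_of_surjective _ (Submodule.mkQ_surjective _) ?_
  rw [Submodule.ker_mkQ, range_eq_map]
  exact Module.Finite.fg_top.map f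

theorem exists_comp_eq_of_exact {f : X →ₗ[A] Y} {g : Y →ₗ[A] Z} (hfg : Function.Exact f g)
    (hg : Function.Surjective g) {h : Y →ₗ[A] W} (hh : h ∘ₗ f = 0) :
    ∃ k : Z →ₗ[A] W, k ∘ₗ g = h := by
  refine ⟨(range f).liftQ h (range_le_ker_iff.2 hh) ∘ₗ
    (hfg.linearEquivOfSurjective hg).symm.toLinearMap, ?_⟩
  ext y
  simp

section Factorization

variable {f : X →ₗ[A] Y} {g : Y →ₗ[A] Z} {h : Y →ₗ[A] W} {r : W →ₗ[A] Z}

theorem exact_comp_prod_mkQ (hfg : Function.Exact f g) (hr : r ∘ₗ h = g) :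
    Function.Exact (h ∘ₗ f) (r.prod (range h).mkQ) := by
  have hr' (y : Y) : r (h y) = g y := LinearMap.congr_fun hr y
  intro c
  constructor
  · intro hc
    obtain ⟨hrc, y, rfl⟩ : r c = 0 ∧ ∃ y, h y = c := by simpa using hc
    obtain ⟨x, rfl⟩ := (hfg y).1 (by rw [← hr', hrc])
    exact ⟨x, rfl⟩
  · rintro ⟨x, rfl⟩
    simp [hr', hfg.apply_apply_eq_zero]

theorem prod_mkQ_surjective (hg : Function.Surjective g) (hr : r ∘ₗ h = g) :
    Function.Surjective (r.prod (range h).mkQ) := by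
  rintro ⟨z, q⟩
  obtain ⟨c, rfl⟩ := Submodule.mkQ_surjective _ q
  obtain ⟨y, hy⟩ := hg (z - r c)
  have hry : r (h y) = z - r c := (LinearMap.congr_fun hr y).trans hy
  exact ⟨c + h y, by simp [hry]⟩

end Factorization

/-- The pushout of `f` and `g`, as the cokernel of `x ↦ (f x, g x)`. The square commutes because the
structure map `LinearPushout.inr` carries a sign. -/
abbrev LinearPushout (f : X →ₗ[A] Y) (g : X →ₗ[A] Z) : Type _ :=
  (Y × Z) ⧸ range (f.prod g)

namespace LinearPushout

/-- The structure map of the pushout from the first module. -/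
def inl (f : X →ₗ[A] Y) (g : X →ₗ[A] Z) : Y →ₗ[A] LinearPushout f g :=
  (range (f.prod g)).mkQ ∘ₗ LinearMap.inl A Y Z

/-- The structure map of the pushout from the second module. -/
def inr (f : X →ₗ[A] Y) (g : X →ₗ[A] Z) : Z →ₗ[A] LinearPushout f g :=
  -((range (f.prod g)).mkQ ∘ₗ LinearMap.inr A Y Z)

section Structure

variable {f : X →ₗ[A] Y} {g : X →ₗ[A] Z}

theorem inl_sub_inr (y : Y) (z : Z) :
    inl f g y - inr f g z = (range (f.prod g)).mkQ (y, z) := by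
  simp only [inl, inr, LinearMap.neg_apply, sub_neg_eq_add, comp_apply, ← map_add,
    inl_apply, inr_apply, Prod.mk_add_mk, add_zero, zero_add]

theorem inl_eq_inr_iff {y : Y} {z : Z} : inl f g y = inr f g z ↔ ∃ x, f x = y ∧ g x = z := by
  rw [← sub_eq_zero, inl_sub_inr]
  simp

theorem exists_inl_sub_inr (p : LinearPushout f g) : ∃ y z, inl f g y - inr f g z = p := by
  obtain ⟨⟨y, z⟩, rfl⟩ := Submodule.mkQ_surjective _ p
  exact ⟨y, z, inl_sub_inr y z⟩

variable (f g) in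
theorem inl_comp : inl f g ∘ₗ f = inr f g ∘ₗ g :=
  LinearMap.ext fun x ↦ inl_eq_inr_iff.2 ⟨x, rfl, rfl⟩

/-- The map out of the pushout given by its universal property. -/
def desc (h : Y →ₗ[A] W) (k : Z →ₗ[A] W) (w : h ∘ₗ f = k ∘ₗ g) : LinearPushout f g →ₗ[A] W :=
  (range (f.prod g)).liftQ (h.coprod (-k)) <| by
    rw [range_le_ker_iff, coprod_comp_prod, neg_comp, w, add_neg_cancel]

section Desc

variable (h : Y →ₗ[A] W) (k : Z →ₗ[A] W) (w : h ∘ₗ f = k ∘ₗ g)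

@[simp]
theorem desc_inl (y : Y) : desc h k w (inl f g y) = h y := by
  simp [desc, inl]

@[simp]
theorem desc_inr (z : Z) : desc h k w (inr f g z) = k z := by
  simp [desc, inr]

end Desc

end Structure

section ExactLeft

variable {f : X →ₗ[A] Y} {g : Y →ₗ[A] Z} (t : Y →ₗ[A] W)

theorem exact_comp_inl (hfg : Function.Exact f g) : Function.Exact (t ∘ₗ f) (inl t g) := by
  intro w
  rw [← map_zero (inr t g), inl_eq_inr_iff]
  constructor
  · rintro ⟨y, rfl, hy⟩
    obtain ⟨x, rfl⟩ := (hfg y).1 hy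
    exact ⟨x, rfl⟩
  · rintro ⟨x, rfl⟩
    exact ⟨f x, rfl, hfg.apply_apply_eq_zero x⟩

theorem inl_surjective (hg : Function.Surjective g) : Function.Surjective (inl t g) := by
  intro p
  obtain ⟨w, z, rfl⟩ := exists_inl_sub_inr p
  obtain ⟨y, rfl⟩ := hg z
  refine ⟨w - t y, ?_⟩
  rw [map_sub, ← comp_apply (inl t g), inl_comp, comp_apply]

end ExactLeft

section Cokernels

variable {C D : Type*} [AddCommGroup C] [Module A C] [AddCommGroup D] [Module A D]
  {f : X →ₗ[A] Y} {g : X →ₗ[A] Z} {p : Y →ₗ[A] C} {q : Z →ₗ[A] D}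

/-- The map from the pushout of `f` and `g` to the product of their cokernels. -/
def toProd (hf : Function.Exact f p) (hg : Function.Exact g q) : LinearPushout f g →ₗ[A] C × D :=
  desc (LinearMap.inl A C D ∘ₗ p) (LinearMap.inr A C D ∘ₗ q) <| by
    rw [comp_assoc, comp_assoc, hf.linearMap_comp_eq_zero, hg.linearMap_comp_eq_zero, comp_zero,
      comp_zero]

theorem toProd_inl_sub_inr (hf : Function.Exact f p) (hg : Function.Exact g q) (y : Y) (z : Z) :
    toProd hf hg (inl f g y - inr f g z) = (p y, -q z) := by
  simp [toProd]

theorem exact_toProd (hf : Function.Exact f p) (hg : Function.Exact g q) :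
    Function.Exact (inl f g ∘ₗ f) (toProd hf hg) := by
  intro c
  constructor
  · obtain ⟨y, z, rfl⟩ := exists_inl_sub_inr c
    rw [toProd_inl_sub_inr, Prod.mk_eq_zero, neg_eq_zero]
    rintro ⟨hy, hz⟩
    obtain ⟨x, rfl⟩ := (hf y).1 hy
    obtain ⟨x', rfl⟩ := (hg z).1 hz
    exact ⟨x - x', by rw [map_sub, ← comp_apply (inr f g), ← inl_comp]; rfl⟩
  · rintro ⟨x, rfl⟩
    simpa [hf.apply_apply_eq_zero, Prod.mk_zero_zero] using toProd_inl_sub_inr hf hg (f x) 0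

theorem toProd_surjective (hf : Function.Exact f p) (hg : Function.Exact g q)
    (hp : Function.Surjective p) (hq : Function.Surjective q) :
    Function.Surjective (toProd hf hg) := by
  rintro ⟨c, d⟩
  obtain ⟨y, rfl⟩ := hp c
  obtain ⟨z, hz⟩ := hq (-d)
  exact ⟨inl f g y - inr f g z, by rw [toProd_inl_sub_inr, hz, neg_neg]⟩

end Cokernels

end LinearPushout

end Cokernel

section FgSubfunctor

open LinearMap

universe u

/-- A finitely presented module under `X`: a linear map from `X` to a finitely presented module. -/
structure FpUnder (A : Type*) [Ring A] (X : Type u) [AddCommGroup X] [Module A X] where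
  cod : Type u
  [addCommGroup : AddCommGroup cod]
  [module : Module A cod]
  [finitePresentation : Module.FinitePresentation A cod]
  hom : X →ₗ[A] cod

attribute [instance] FpUnder.addCommGroup FpUnder.module FpUnder.finitePresentation

variable {A : Type*} {X Y Z : Type u} [Ring A] [AddCommGroup X] [Module A X] [AddCommGroup Y]
  [Module A Y] [AddCommGroup Z] [Module A Z]

instance : Preorder (FpUnder A X) where
  le u w := ∃ t : w.cod →ₗ[A] u.cod, t ∘ₗ w.hom = u.hom
  le_refl _ := ⟨LinearMap.id, rfl⟩
  le_trans := by
    rintro u v w ⟨s, hs⟩ ⟨t, ht⟩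
    exact ⟨s ∘ₗ t, by rw [comp_assoc, ht, hs]⟩

variable (A X) in
/-- The finitely generated subfunctors of `Hom_A(X, -)` on the finitely presented modules: such a
subfunctor is the image of `Hom_A(C, -)` under precomposition with some `u : X → C`, and the image
of `u` is contained in that of `w` if and only if `u` factors through `w`. -/
abbrev FgSubfunctor : Type _ :=
  Antisymmetrization (FpUnder A X) (· ≤ ·)

namespace FgSubfunctor

/-- The subfunctor of the maps out of `X` which factor through `f`. -/
def of [Module.FinitePresentation A Y] (f : X →ₗ[A] Y) : FgSubfunctor A X :=
  toAntisymmetrization _ ⟨Y, f⟩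

@[elab_as_elim, induction_eliminator]
theorem induction {motive : FgSubfunctor A X → Prop}
    (of : ∀ {C : Type u} [AddCommGroup C] [Module A C] [Module.FinitePresentation A C]
      (f : X →ₗ[A] C), motive (of f)) (u : FgSubfunctor A X) : motive u :=
  Antisymmetrization.ind _ (fun u ↦ of u.hom) u

theorem of_le_of_iff [Module.FinitePresentation A Y] [Module.FinitePresentation A Z]
    {f : X →ₗ[A] Y} {g : X →ₗ[A] Z} : of g ≤ of f ↔ ∃ t : Y →ₗ[A] Z, t ∘ₗ f = g :=
  Iff.rfl

instance : OrderBot (FgSubfunctor A X) where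
  bot := of (0 : X →ₗ[A] PUnit.{u + 1})
  bot_le u := by
    induction u with
    | of f => exact of_le_of_iff.2 ⟨0, zero_comp f⟩

instance [Module.FinitePresentation A X] : OrderTop (FgSubfunctor A X) where
  top := of LinearMap.id
  le_top u := by
    induction u with
    | of f => exact of_le_of_iff.2 ⟨f, comp_id f⟩

theorem of_zero [Module.FinitePresentation A Y] : of (0 : X →ₗ[A] Y) = ⊥ :=
  le_bot_iff.1 <| of_le_of_iff.2 ⟨0, comp_zero 0⟩

theorem of_id [Module.FinitePresentation A X] : of (LinearMap.id : X →ₗ[A] X) = ⊤ :=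
  rfl

theorem of_eq_top [Module.FinitePresentation A X] [Module.FinitePresentation A Y] {f : X →ₗ[A] Y}
    {r : Y →ₗ[A] X} (h : r ∘ₗ f = LinearMap.id) : of f = ⊤ :=
  top_le_iff.1 <| of_le_of_iff.2 ⟨r, h⟩

section Lattice

section Pair

variable [Module.FinitePresentation A Y] [Module.FinitePresentation A Z]

theorem isLUB_of_prod (f : X →ₗ[A] Y) (g : X →ₗ[A] Z) : IsLUB {of f, of g} (of (f.prod g)) := by
  refine ⟨?_, fun u hu ↦ ?_⟩
  · rintro _ (rfl | rfl)
    exacts [of_le_of_iff.2 ⟨fst A Y Z, fst_prod f g⟩, of_le_of_iff.2 ⟨snd A Y Z, snd_prod f g⟩]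
  · induction u with
    | of h =>
      obtain ⟨s, hs⟩ := of_le_of_iff.1 (hu (.inl rfl))
      obtain ⟨t, ht⟩ := of_le_of_iff.1 (hu (.inr rfl))
      exact of_le_of_iff.2 ⟨s.prod t, by rw [prod_comp, hs, ht]⟩

theorem isGLB_of_inl_comp [Module.Finite A X] (f : X →ₗ[A] Y) (g : X →ₗ[A] Z) :
    IsGLB {of f, of g} (of (LinearPushout.inl f g ∘ₗ f)) := by
  refine ⟨?_, fun u hu ↦ ?_⟩
  · rintro _ (rfl | rfl)
    exacts [of_le_of_iff.2 ⟨_, rfl⟩, of_le_of_iff.2 ⟨_, (LinearPushout.inl_comp f g).symm⟩]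
  · induction u with
    | of h =>
      obtain ⟨s, hs⟩ := of_le_of_iff.1 (hu (.inl rfl))
      obtain ⟨t, ht⟩ := of_le_of_iff.1 (hu (.inr rfl))
      refine of_le_of_iff.2 ⟨LinearPushout.desc s t (hs.trans ht.symm), ?_⟩
      ext x
      simp [← hs]

end Pair

theorem exists_isLUB (u w : FgSubfunctor A X) : ∃ s, IsLUB {u, w} s := by
  induction u with
  | of f =>
    induction w with
    | of g => exact ⟨_, isLUB_of_prod f g⟩

variable [Module.Finite A X]

theorem exists_isGLB (u w : FgSubfunctor A X) : ∃ s, IsGLB {u, w} s := by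
  induction u with
  | of f =>
    induction w with
    | of g => exact ⟨_, isGLB_of_inl_comp f g⟩

noncomputable instance : Lattice (FgSubfunctor A X) :=
  Lattice.ofIsLUBofIsGLB (fun u w ↦ (exists_isLUB u w).choose) (fun u w ↦ (exists_isGLB u w).choose)
    (fun u w ↦ (exists_isLUB u w).choose_spec) (fun u w ↦ (exists_isGLB u w).choose_spec)

variable [Module.FinitePresentation A Y] [Module.FinitePresentation A Z]

theorem of_sup_of (f : X →ₗ[A] Y) (g : X →ₗ[A] Z) : of f ⊔ of g = of (f.prod g) :=
  isLUB_pair.unique (isLUB_of_prod f g)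

theorem of_inf_of (f : X →ₗ[A] Y) (g : X →ₗ[A] Z) :
    of f ⊓ of g = of (LinearPushout.inl f g ∘ₗ f) :=
  isGLB_pair.unique (isGLB_of_inl_comp f g)

end Lattice

section Image

/-- The image of a subfunctor under the map `Hom_A(Y, -) → Hom_A(X, -)` of precomposition with
`f`. -/
def image (f : X →ₗ[A] Y) : FgSubfunctor A Y →o FgSubfunctor A X :=
  OrderHom.antisymmetrization
    { toFun u := ⟨u.cod, u.hom ∘ₗ f⟩
      monotone' := by
        rintro u w ⟨t, ht⟩
        exact ⟨t, by rw [← comp_assoc, ht]⟩ }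

theorem image_of [Module.FinitePresentation A Z] (f : X →ₗ[A] Y) (h : Y →ₗ[A] Z) :
    image f (of h) = of (h ∘ₗ f) :=
  rfl

theorem image_top [Module.FinitePresentation A Y] (f : X →ₗ[A] Y) : image f ⊤ = of f :=
  rfl

theorem image_of_eq_bot [Module.FinitePresentation A Z] {f : X →ₗ[A] Y} {g : Y →ₗ[A] Z}
    (hfg : Function.Exact f g) : image f (of g) = ⊥ := by
  rw [image_of, hfg.linearMap_comp_eq_zero, of_zero]

variable [Module.Finite A X] [Module.FinitePresentation A Y]

/-- The preimage of a subfunctor under the map `Hom_A(Y, -) → Hom_A(X, -)` of precomposition with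
`f`. -/
def preimage (f : X →ₗ[A] Y) : FgSubfunctor A X →o FgSubfunctor A Y :=
  OrderHom.antisymmetrization
    { toFun u := ⟨_, LinearPushout.inr u.hom f⟩
      monotone' := by
        rintro u w ⟨t, ht⟩
        have comm : (LinearPushout.inl u.hom f ∘ₗ t) ∘ₗ w.hom = LinearPushout.inr u.hom f ∘ₗ f := by
          rw [comp_assoc, ht, LinearPushout.inl_comp]
        exact ⟨LinearPushout.desc _ _ comm, by ext; simp⟩ }

theorem preimage_of [Module.FinitePresentation A Z] (f : X →ₗ[A] Y) (h : X →ₗ[A] Z) :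
    preimage f (of h) = of (LinearPushout.inr h f) :=
  rfl

theorem image_preimage {f : X →ₗ[A] Y} {u : FgSubfunctor A X} (hu : u ≤ of f) :
    image f (preimage f u) = u := by
  induction u with
  | of h =>
    obtain ⟨t, ht⟩ := of_le_of_iff.1 hu
    rw [preimage_of, image_of]
    refine le_antisymm (of_le_of_iff.2 ⟨LinearPushout.inl h f, LinearPushout.inl_comp h f⟩)
      (of_le_of_iff.2 ⟨LinearPushout.desc LinearMap.id t ht.symm, ?_⟩)
    ext x
    simpa using LinearMap.congr_fun ht x

theorem preimage_image [Module.FinitePresentation A Z] {f : X →ₗ[A] Y} {g : Y →ₗ[A] Z}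
    (hfg : Function.Exact f g) (hg : Function.Surjective g) {u : FgSubfunctor A Y}
    (hu : of g ≤ u) : preimage f (image f u) = u := by
  induction u with
  | of h =>
    obtain ⟨k, rfl⟩ := of_le_of_iff.1 hu
    rw [image_of, preimage_of]
    refine le_antisymm ?_ (of_le_of_iff.2 ⟨LinearPushout.desc LinearMap.id h rfl, by ext; simp⟩)
    have kills_f : (LinearPushout.inl (h ∘ₗ f) f ∘ₗ h - LinearPushout.inr (h ∘ₗ f) f) ∘ₗ f = 0 := by
      rw [sub_comp, comp_assoc, LinearPushout.inl_comp, sub_self]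
    obtain ⟨r, hr⟩ := exists_comp_eq_of_exact hfg hg kills_f
    refine of_le_of_iff.2 ⟨LinearPushout.inl (h ∘ₗ f) f - r ∘ₗ k, ?_⟩
    rw [sub_comp, comp_assoc, hr, sub_sub_cancel]

end Image

end FgSubfunctor

end FgSubfunctor

/-- The type of functions assigning a natural number to each `A`-module, in which the subadditive
functions live. Only the values on the finitely presented modules matter. -/
abbrev FpFunction (A : Type) [Ring A] : Type 1 :=
  (X : Type) → [AddCommGroup X] → [Module A X] → ℕ

section Length

open LinearMap

variable {A : Type} [Ring A] {χ : FpFunction A} {X Y Z : Type} [AddCommGroup X] [Module A X]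
  [AddCommGroup Y] [Module A Y] [AddCommGroup Z] [Module A Z]

namespace IsSubadditive

section Basic

theorem map_punit (hχ : IsSubadditive A χ) : χ PUnit = 0 := by
  have h := hχ.2.1 PUnit PUnit inferInstance inferInstance
  rw [hχ.1 _ _ inferInstance inferInstance LinearEquiv.prodUnique] at h
  lia

variable [Module.FinitePresentation A Y] [Module.FinitePresentation A Z]

theorem map_equiv (hχ : IsSubadditive A χ) (e : Y ≃ₗ[A] Z) : χ Y = χ Z :=
  hχ.1 Y Z inferInstance inferInstance e

theorem map_prod (hχ : IsSubadditive A χ) : χ (Y × Z) = χ Y + χ Z :=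
  hχ.2.1 Y Z inferInstance inferInstance

theorem le_of_exact [Module.FinitePresentation A X] (hχ : IsSubadditive A χ) {f : X →ₗ[A] Y}
    {g : Y →ₗ[A] Z} (hfg : Function.Exact f g) (hg : Function.Surjective g) : χ Y ≤ χ X + χ Z :=
  hχ.2.2 X Y Z inferInstance inferInstance inferInstance f g hfg hg

theorem add_le_add_pushout [Module.FinitePresentation A X] (hχ : IsSubadditive A χ)
    (f : X →ₗ[A] Y) (g : X →ₗ[A] Z) : χ Y + χ Z ≤ χ X + χ (LinearPushout f g) :=
  hχ.map_prod.symm.trans_le <|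
    hχ.le_of_exact (exact_map_mkQ_range (f.prod g)) (Submodule.mkQ_surjective _)

theorem map_coker [Module.Finite A X] (hχ : IsSubadditive A χ) {f : X →ₗ[A] Y} {g : Y →ₗ[A] Z}
    (hfg : Function.Exact f g) (hg : Function.Surjective g) : χ (Y ⧸ range f) = χ Z :=
  hχ.map_equiv (hfg.linearEquivOfSurjective hg)

variable [Module.Finite A X]

theorem add_coker_le_add_coker_comp (hχ : IsSubadditive A χ) (f : X →ₗ[A] Y) (t : Y →ₗ[A] Z) :
    χ Z + χ (Y ⧸ range f) ≤ χ Y + χ (Z ⧸ range (t ∘ₗ f)) := by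
  have coker_comp : χ (Z ⧸ range (t ∘ₗ f)) = χ (LinearPushout t (range f).mkQ) :=
    hχ.map_coker (LinearPushout.exact_comp_inl t (exact_map_mkQ_range f))
      (LinearPushout.inl_surjective t (Submodule.mkQ_surjective _))
  exact (hχ.add_le_add_pushout t (range f).mkQ).trans_eq (by rw [coker_comp])

/-- The length, with respect to `χ`, of a finitely generated subfunctor of `Hom_A(X, -)`: that of
the image of `f : X → Y` is `χ Y - χ (coker f)`. -/
noncomputable def length (hχ : IsSubadditive A χ) : FgSubfunctor A X →o ℤ :=
  have mono (u w : FpUnder A X) (huw : u ≤ w) :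
      (χ u.cod : ℤ) - χ (u.cod ⧸ range u.hom) ≤ χ w.cod - χ (w.cod ⧸ range w.hom) := by
    obtain ⟨t, ht⟩ := huw
    have h := hχ.add_coker_le_add_coker_comp w.hom t
    rw [ht] at h
    lia
  { toFun := Quotient.lift (fun u : FpUnder A X ↦ (χ u.cod : ℤ) - χ (u.cod ⧸ range u.hom))
      fun u w huw ↦ le_antisymm (mono u w huw.1) (mono w u huw.2)
    monotone' u w := Quotient.inductionOn₂ u w mono }

theorem length_of (hχ : IsSubadditive A χ) (f : X →ₗ[A] Y) :
    hχ.length (.of f) = χ Y - χ (Y ⧸ range f) :=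
  rfl

theorem length_of_exact (hχ : IsSubadditive A χ) {f : X →ₗ[A] Y} {g : Y →ₗ[A] Z}
    (hfg : Function.Exact f g) (hg : Function.Surjective g) :
    hχ.length (.of f) = χ Y - χ Z := by
  rw [length_of, hχ.map_coker hfg hg]

end Basic

theorem length_bot [Module.Finite A X] (hχ : IsSubadditive A χ) :
    hχ.length (⊥ : FgSubfunctor A X) = 0 := by
  have exact_zero_id : Function.Exact (0 : X →ₗ[A] PUnit.{1}) (LinearMap.id : PUnit →ₗ[A] PUnit) :=
    fun _ ↦ ⟨fun _ ↦ ⟨0, rfl⟩, fun _ ↦ rfl⟩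
  exact (hχ.length_of_exact exact_zero_id Function.surjective_id).trans (sub_self _)

theorem length_top [Module.FinitePresentation A X] (hχ : IsSubadditive A χ) :
    hχ.length (⊤ : FgSubfunctor A X) = χ X := by
  have exact_id_zero : Function.Exact (LinearMap.id : X →ₗ[A] X) (0 : X →ₗ[A] PUnit.{1}) :=
    fun x ↦ ⟨fun _ ↦ ⟨x, rfl⟩, fun _ ↦ rfl⟩
  rw [← FgSubfunctor.of_id, hχ.length_of_exact exact_id_zero fun _ ↦ ⟨0, rfl⟩, hχ.map_punit]
  simp

theorem isModularValuation_length [Module.Finite A X] (hχ : IsSubadditive A χ) :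
    IsModularValuation (hχ.length : FgSubfunctor A X →o ℤ) := by
  intro u w
  induction u with
  | @of C _ _ _ f =>
    induction w with
    | @of D _ _ _ g =>
      have coker_inf := hχ.length_of_exact
        (LinearPushout.exact_toProd (exact_map_mkQ_range f) (exact_map_mkQ_range g))
        (LinearPushout.toProd_surjective _ _ (Submodule.mkQ_surjective _)
          (Submodule.mkQ_surjective _))
      rw [FgSubfunctor.of_sup_of, FgSubfunctor.of_inf_of, coker_inf]
      simp only [length_of, hχ.map_prod, Nat.cast_add]
      ring

theorem length_image [Module.Finite A X] [Module.FinitePresentation A Y]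
    [Module.FinitePresentation A Z] (hχ : IsSubadditive A χ) {f : X →ₗ[A] Y} {g : Y →ₗ[A] Z}
    (hfg : Function.Exact f g) (hg : Function.Surjective g) {u : FgSubfunctor A Y}
    (hu : .of g ≤ u) : hχ.length (FgSubfunctor.image f u) + χ Z = hχ.length u := by
  induction u with
  | of h =>
    obtain ⟨r, hr⟩ := FgSubfunctor.of_le_of_iff.1 hu
    rw [FgSubfunctor.image_of, hχ.length_of_exact (exact_comp_prod_mkQ hfg hr)
      (prod_mkQ_surjective hg hr), length_of, hχ.map_prod]
    push_cast
    ring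

theorem length_add [Module.Finite A X] {a b c d : FpFunction A} (ha : IsSubadditive A a)
    (hb : IsSubadditive A b) (hc : IsSubadditive A c) (hd : IsSubadditive A d)
    (h : FpEq A (fun X _ _ ↦ a X + b X) (fun X _ _ ↦ c X + d X)) (u : FgSubfunctor A X) :
    ha.length u + hb.length u = hc.length u + hd.length u := by
  induction u with
  | @of C _ _ _ f =>
    have hC := h C inferInstance
    have hcoker := h (C ⧸ range f) inferInstance
    simp only [length_of]
    lia

end IsSubadditive

end Length

section Inf

open LinearMap

variable {A : Type} [Ring A] {c d : FpFunction A} {X Y Z : Type} [AddCommGroup X]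
  [Module A X] [AddCommGroup Y] [Module A Y] [AddCommGroup Z] [Module A Z]

namespace IsSubadditive

section Transport

variable [Module.FinitePresentation A Y] [Module.FinitePresentation A Z]

/-- The preimage and image maps of `f` identify the interval `[of g, ⊤]` of subfunctors of
`Hom_A(Y, -)` with the interval `[⊥, of f]` of subfunctors of `Hom_A(X, -)`, and preserve length
increments. -/
theorem intervalInf_length_of_top [Module.Finite A X] (hc : IsSubadditive A c)
    (hd : IsSubadditive A d) {f : X →ₗ[A] Y} {g : Y →ₗ[A] Z} (hfg : Function.Exact f g)
    (hg : Function.Surjective g) :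
    intervalInf hc.length hd.length (.of g) ⊤ = intervalInf hc.length hd.length ⊥ (.of f) := by
  have preimage_bot : FgSubfunctor.preimage f ⊥ = .of g := by
    rw [← FgSubfunctor.image_of_eq_bot hfg, FgSubfunctor.preimage_image hfg hg le_rfl]
  have preimage_of : FgSubfunctor.preimage f (.of f) = ⊤ := by
    rw [← FgSubfunctor.image_top, FgSubfunctor.preimage_image hfg hg le_top]
  have length_preimage {χ : FpFunction A} (hχ : IsSubadditive A χ) {u : FgSubfunctor A X}
      (hu : u ≤ .of f) : hχ.length (FgSubfunctor.preimage f u) = hχ.length u + χ Z := by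
    have hgu : .of g ≤ FgSubfunctor.preimage f u :=
      preimage_bot ▸ (FgSubfunctor.preimage f).monotone bot_le
    rw [← hχ.length_image hfg hg hgu, FgSubfunctor.image_preimage hu]
  apply le_antisymm
  · rw [← preimage_bot, ← preimage_of]
    refine intervalInf_map_le _ bot_le (fun u w _ huw hw ↦ ?_) (fun u w _ huw hw ↦ ?_) <;>
      simp [length_preimage, huw.trans hw, hw]
  · rw [← FgSubfunctor.image_of_eq_bot hfg, ← FgSubfunctor.image_top f]
    refine intervalInf_map_le _ le_top (fun u w hu huw _ ↦ ?_) (fun u w hu huw _ ↦ ?_) <;>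
      simp [← length_image _ hfg hg (hu.trans huw), ← length_image _ hfg hg hu]

theorem intervalInf_length_bot_of (hc : IsSubadditive A c) (hd : IsSubadditive A d)
    {g : Y →ₗ[A] Z} (hg : Function.Surjective g) :
    intervalInf hc.length hd.length ⊥ (.of g) =
      intervalInf hc.length hd.length (⊥ : FgSubfunctor A Z) ⊤ := by
  have exact_zero : Function.Exact g (0 : Z →ₗ[A] PUnit.{1}) :=
    (exact_zero_iff_surjective PUnit g).2 hg
  rw [← hc.intervalInf_length_of_top hd exact_zero fun _ ↦ ⟨0, rfl⟩, FgSubfunctor.of_zero]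

end Transport

open Classical in
/-- The infimum of two subadditive functions with respect to the summand order. Its value at `X` is
the infimum of the two lengths over the whole lattice of subfunctors of `Hom_A(X, -)`. -/
noncomputable def inf (hc : IsSubadditive A c) (hd : IsSubadditive A d) : FpFunction A :=
  fun X _ _ ↦
    if _ : Module.FinitePresentation A X then
      (intervalInf hc.length hd.length (⊥ : FgSubfunctor A X) ⊤).toNat
    else 0

section Value

variable [Module.FinitePresentation A X]

theorem inf_apply (hc : IsSubadditive A c) (hd : IsSubadditive A d) :
    (hc.inf hd X : ℤ) = intervalInf hc.length hd.length (⊥ : FgSubfunctor A X) ⊤ := by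
  rw [inf, dif_pos ‹_›, Int.toNat_of_nonneg (intervalInf_nonneg bot_le)]

theorem inf_comm (hc : IsSubadditive A c) (hd : IsSubadditive A d) :
    hc.inf hd X = hd.inf hc X := by
  zify
  rw [inf_apply, inf_apply, intervalInf_comm]

theorem inf_le_left (hc : IsSubadditive A c) (hd : IsSubadditive A d) : hc.inf hd X ≤ c X := by
  have h := intervalInf_le_left (v := hc.length) (w := hd.length)
    (bot_le (a := (⊤ : FgSubfunctor A X)))
  rw [← inf_apply, length_bot, length_top] at h
  lia

end Value

section Exact

variable [Module.FinitePresentation A X] [Module.FinitePresentation A Y]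
  [Module.FinitePresentation A Z]

theorem inf_add_inf (hc : IsSubadditive A c) (hd : IsSubadditive A d) {f : X →ₗ[A] Y}
    {g : Y →ₗ[A] Z} (hfg : Function.Exact f g) (hg : Function.Surjective g) :
    (hc.inf hd X + hc.inf hd Z : ℤ) =
      hc.inf hd Y + intervalInf hc.length hd.length (.of f) ⊤ := by
  simp only [inf_apply]
  rw [← intervalInf_add hc.isModularValuation_length hd.isModularValuation_length
      (bot_le (a := .of f)) le_top,
    ← intervalInf_add hc.isModularValuation_length hd.isModularValuation_length
      (bot_le (a := .of g)) le_top,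
    hc.intervalInf_length_of_top hd hfg hg, hc.intervalInf_length_bot_of hd hg]
  ring

theorem inf_add_inf_of_retraction (hc : IsSubadditive A c) (hd : IsSubadditive A d)
    {f : X →ₗ[A] Y} {g : Y →ₗ[A] Z} (hfg : Function.Exact f g) (hg : Function.Surjective g)
    {r : Y →ₗ[A] X} (hr : r ∘ₗ f = LinearMap.id) : hc.inf hd X + hc.inf hd Z = hc.inf hd Y := by
  have h := hc.inf_add_inf hd hfg hg
  rw [FgSubfunctor.of_eq_top hr, intervalInf_self] at h
  lia

theorem inf_add_inf_le (hc : IsSubadditive A c) (hd : IsSubadditive A d) {f : X →ₗ[A] Y}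
    {g : Y →ₗ[A] Z} (hfg : Function.Exact f g) (hg : Function.Surjective g) :
    hc.inf hd X + hc.inf hd Z + c Y ≤ c X + c Z + hc.inf hd Y := by
  have defect := hc.inf_add_inf hd hfg hg
  have defect_le := intervalInf_le_left (v := hc.length) (w := hd.length)
    (le_top (a := FgSubfunctor.of f))
  rw [hc.length_of_exact hfg hg, length_top] at defect_le
  lia

end Exact

theorem isSubadditive_inf (hc : IsSubadditive A c) (hd : IsSubadditive A d) :
    IsSubadditive A (hc.inf hd) := by
  refine ⟨fun X Y _ _ _ _ _ _ e ↦ ?_, fun X Y _ _ _ _ _ _ ↦ ?_,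
    fun X Y Z _ _ _ _ _ _ _ _ _ f g hfg hg ↦ ?_⟩
  · have exact_zero : Function.Exact (0 : PUnit.{1} →ₗ[A] X) (e : X →ₗ[A] Y) :=
      (exact_zero_iff_injective PUnit _).2 e.injective
    have h := hc.inf_add_inf_of_retraction hd exact_zero e.surjective (r := 0)
      (Subsingleton.elim _ _)
    have hzero : hc.inf hd PUnit = 0 := by
      have := hc.inf_le_left hd (X := PUnit)
      rwa [hc.map_punit, Nat.le_zero] at this
    lia
  · exact (hc.inf_add_inf_of_retraction hd .inl_snd Prod.snd_surjective (fst_comp_inl A X Y)).symm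
  · have h := hc.inf_add_inf hd hfg hg
    have defect_nonneg := intervalInf_nonneg (v := hc.length) (w := hd.length)
      (le_top (a := FgSubfunctor.of f))
    lia

end IsSubadditive

end Inf

section Summand

variable {A : Type} [Ring A] {a b c d m p χ : FpFunction A}

theorem FpEq.symm (h : FpEq A a b) : FpEq A b a :=
  fun X _ _ hX ↦ (h X hX).symm

theorem FpEq.trans (hab : FpEq A a b) (hbc : FpEq A b c) : FpEq A a c :=
  fun X _ _ hX ↦ (hab X hX).trans (hbc X hX)

/-- `p` is a summand of `a` in the monoid of subadditive functions, that is, `p` divides `a` in this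
additively written monoid. -/
def IsSummand (p a : FpFunction A) : Prop :=
  ∃ x, IsSubadditive A x ∧ FpEq A a fun X _ _ ↦ p X + x X

theorem IsSummand.congr_left (hm : IsSummand m a) (h : FpEq A m p) : IsSummand p a := by
  obtain ⟨x, hx, ha⟩ := hm
  exact ⟨x, hx, ha.trans fun X _ _ hX ↦ congrArg (· + x X) (h X hX)⟩

theorem not_fpNonzero_iff : ¬ FpNonzero A χ ↔ FpEq A χ fun _ _ _ ↦ 0 := by
  simp [FpNonzero, FpEq]

namespace IsSubadditive

theorem isSummand_of_defect_le (hc : IsSubadditive A c) (hm : IsSubadditive A m)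
    (hle : ∀ (X : Type) [AddCommGroup X] [Module A X] [Module.FinitePresentation A X], m X ≤ c X)
    (hdefect : ∀ {X Y Z : Type} [AddCommGroup X] [Module A X] [AddCommGroup Y] [Module A Y]
      [AddCommGroup Z] [Module A Z] [Module.FinitePresentation A X]
      [Module.FinitePresentation A Y] [Module.FinitePresentation A Z] {f : X →ₗ[A] Y}
      {g : Y →ₗ[A] Z}, Function.Exact f g → Function.Surjective g →
        m X + m Z + c Y ≤ c X + c Z + m Y) :
    IsSummand m c := by
  refine ⟨fun X _ _ ↦ c X - m X, ⟨fun X Y _ _ _ _ _ _ e ↦ ?_, fun X Y _ _ _ _ _ _ ↦ ?_,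
    fun X Y Z _ _ _ _ _ _ _ _ _ f g hfg hg ↦ ?_⟩, fun X _ _ _ ↦ (Nat.add_sub_of_le (hle X)).symm⟩
  · simp only [hc.map_equiv e, hm.map_equiv e]
  · simp only [hc.map_prod, hm.map_prod]
    have := hle X
    have := hle Y
    lia
  · have := hle X
    have := hle Y
    have := hle Z
    have := hdefect hfg hg
    lia

theorem inf_isSummand_left (hc : IsSubadditive A c) (hd : IsSubadditive A d) :
    IsSummand (hc.inf hd) c :=
  hc.isSummand_of_defect_le (hc.isSubadditive_inf hd) (fun _ ↦ hc.inf_le_left hd)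
    (hc.inf_add_inf_le hd)

theorem inf_isSummand_right (hc : IsSubadditive A c) (hd : IsSubadditive A d) :
    IsSummand (hc.inf hd) d :=
  (hd.inf_isSummand_left hc).congr_left fun _ _ _ _ ↦ hd.inf_comm hc

theorem le_inf_add_inf {X : Type} [AddCommGroup X] [Module A X] [Module.FinitePresentation A X]
    (hp : IsSubadditive A p) (ha : IsSubadditive A a) (hb : IsSubadditive A b)
    (h : IsSummand p fun X _ _ ↦ a X + b X) : p X ≤ hp.inf ha X + hp.inf hb X := by
  obtain ⟨x, hx, hsum⟩ := h
  have increment_le : ∀ ⦃u w : FgSubfunctor A X⦄, u ≤ w → hp.length w - hp.length u ≤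
      (ha.length w - ha.length u) + (hb.length w - hb.length u) := by
    intro u w huw
    linarith [length_add ha hb hp hx hsum u, length_add ha hb hp hx hsum w, hx.length.monotone huw]
  have h := sub_le_intervalInf_add_intervalInf hp.isModularValuation_length
    hb.isModularValuation_length increment_le (bot_le (a := ⊤))
  rw [length_top, length_bot, ← inf_apply, ← inf_apply] at h
  lia

theorem zero : IsSubadditive A fun _ _ _ ↦ 0 :=
  ⟨fun _ _ _ _ _ _ _ _ _ ↦ rfl, fun _ _ _ _ _ _ _ _ ↦ rfl,
    fun _ _ _ _ _ _ _ _ _ _ _ _ _ _ _ _ ↦ le_rfl⟩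

theorem add (ha : IsSubadditive A a) (hb : IsSubadditive A b) :
    IsSubadditive A fun X _ _ ↦ a X + b X := by
  refine ⟨fun X Y _ _ _ _ _ _ e ↦ ?_, fun X Y _ _ _ _ _ _ ↦ ?_,
    fun X Y Z _ _ _ _ _ _ _ _ _ f g hfg hg ↦ ?_⟩
  · simp only [ha.map_equiv e, hb.map_equiv e]
  · simp only [ha.map_prod, hb.map_prod]
    exact add_add_add_comm ..
  · exact (add_le_add (ha.le_of_exact hfg hg) (hb.le_of_exact hfg hg)).trans_eq
      (add_add_add_comm ..)

theorem sum {ι : Type*} {s : Finset ι} {c : ι → FpFunction A}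
    (hc : ∀ i ∈ s, IsSubadditive A (c i)) : IsSubadditive A fun X _ _ ↦ ∑ i ∈ s, c i X := by
  induction s using Finset.cons_induction with
  | empty => simpa using zero
  | cons i s hi ih =>
    simp only [Finset.sum_cons]
    exact (hc i (by simp)).add (ih fun j hj ↦ hc j (by simp [hj]))

theorem map_eq_zero (hχ : IsSubadditive A χ) (h : χ A = 0) {X : Type} [AddCommGroup X] [Module A X]
    [Module.FinitePresentation A X] : χ X = 0 := by
  have map_free (n : ℕ) : χ (Fin n → A) = 0 := by
    induction n with
    | zero => rw [hχ.map_equiv (LinearEquiv.ofSubsingleton (Fin 0 → A) PUnit.{1}), hχ.map_punit]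
    | succ n ih =>
      rw [← hχ.map_equiv (Fin.consLinearEquiv A fun _ : Fin (n + 1) ↦ A), hχ.map_prod, h, ih]
  obtain ⟨n, f, hf⟩ := Module.Finite.exists_fin' A X
  have exact_zero : Function.Exact f (0 : X →ₗ[A] PUnit.{1}) :=
    (LinearMap.exact_zero_iff_surjective PUnit f).2 hf
  have hle := hχ.le_of_exact exact_zero fun _ ↦ ⟨0, rfl⟩
  rwa [map_free, hχ.map_punit, Nat.le_zero] at hle

theorem map_pos (hχ : IsSubadditive A χ) (hne : FpNonzero A χ) : 0 < χ A := by
  obtain ⟨X, _, _, _, hX⟩ := hne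
  exact Nat.pos_of_ne_zero fun h ↦ hX (hχ.map_eq_zero h)

end IsSubadditive

namespace IsIrreducibleSubadditive

theorem fpEq_of_isSummand (hp : IsIrreducibleSubadditive A p) (hm : IsSubadditive A m)
    (hne : FpNonzero A m) (h : IsSummand m p) : FpEq A m p := by
  obtain ⟨x, hx, hsum⟩ := h
  have x_eq_zero : FpEq A x fun _ _ _ ↦ 0 :=
    not_fpNonzero_iff.1 fun hxne ↦ hp.2.2 ⟨m, x, hm, hx, hne, hxne, hsum⟩
  exact fun X _ _ hX ↦ by simp [hsum X hX, x_eq_zero X hX]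

theorem isSummand_or_inf_eq_zero (hp : IsIrreducibleSubadditive A p) (ha : IsSubadditive A a) :
    IsSummand p a ∨ FpEq A (hp.1.inf ha) fun _ _ _ ↦ 0 := by
  by_cases hne : FpNonzero A (hp.1.inf ha)
  · have inf_eq : FpEq A (hp.1.inf ha) p :=
      hp.fpEq_of_isSummand (hp.1.isSubadditive_inf ha) hne (hp.1.inf_isSummand_left ha)
    exact .inl <| (hp.1.inf_isSummand_right ha).congr_left inf_eq
  · exact .inr (not_fpNonzero_iff.1 hne)

theorem isSummand_or_isSummand (hp : IsIrreducibleSubadditive A p) (ha : IsSubadditive A a)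
    (hb : IsSubadditive A b) (h : IsSummand p fun X _ _ ↦ a X + b X) :
    IsSummand p a ∨ IsSummand p b := by
  by_contra! hcon
  have inf_a_eq_zero := (hp.isSummand_or_inf_eq_zero ha).resolve_left hcon.1
  have inf_b_eq_zero := (hp.isSummand_or_inf_eq_zero hb).resolve_left hcon.2
  obtain ⟨X, _, _, hX, hne⟩ := hp.2.1
  have hle := hp.1.le_inf_add_inf ha hb h (X := X)
  rw [inf_a_eq_zero X hX, inf_b_eq_zero X hX] at hle
  exact hne (Nat.le_zero.1 hle)

theorem exists_isSummand_of_sum {ι : Type*} {s : Finset ι} {c : ι → FpFunction A}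
    (hp : IsIrreducibleSubadditive A p) (hc : ∀ i ∈ s, IsSubadditive A (c i))
    (h : IsSummand p fun X _ _ ↦ ∑ i ∈ s, c i X) : ∃ i ∈ s, IsSummand p (c i) := by
  induction s using Finset.cons_induction with
  | empty =>
    obtain ⟨x, -, hsum⟩ := h
    obtain ⟨X, _, _, hX, hne⟩ := hp.2.1
    have : 0 = p X + x X := by simpa using hsum X hX
    lia
  | cons i s hi ih =>
    simp only [Finset.sum_cons] at h
    have hcs : ∀ j ∈ s, IsSubadditive A (c j) := fun j hj ↦ hc j (by simp [hj])
    obtain hci | hsum := hp.isSummand_or_isSummand (hc i (by simp)) (.sum hcs) h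
    · exact ⟨i, by simp, hci⟩
    · obtain ⟨j, hj, hcj⟩ := ih hcs hsum
      exact ⟨j, by simp [hj], hcj⟩

end IsIrreducibleSubadditive

section Decomposition

theorem IsSubadditive.exists_irreducible_decomposition (hχ : IsSubadditive A χ) :
    ∃ (n : ℕ) (c : Fin n → FpFunction A), (∀ i, IsIrreducibleSubadditive A (c i)) ∧
      FpEq A χ fun X _ _ ↦ ∑ i, c i X := by
  induction hN : χ A using Nat.strong_induction_on generalizing χ with
  | _ N ih =>
  by_cases hne : FpNonzero A χ
  · by_cases hirr : IsIrreducibleSubadditive A χ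
    · exact ⟨1, fun _ ↦ χ, fun _ ↦ hirr, fun X _ _ _ ↦ by simp⟩
    · obtain ⟨a, b, ha, hb, hane, hbne, hsum⟩ := not_not.1 fun h ↦ hirr ⟨hχ, hne, h⟩
      have sum_A : χ A = a A + b A := hsum A inferInstance
      have a_pos := ha.map_pos hane
      have b_pos := hb.map_pos hbne
      obtain ⟨n, c, hc, hac⟩ := ih (a A) (by lia) ha rfl
      obtain ⟨m, d, hd, hbd⟩ := ih (b A) (by lia) hb rfl
      refine ⟨n + m, Fin.append c d, ?_, fun X _ _ hX ↦ ?_⟩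
      · simpa [Fin.forall_fin_add] using ⟨hc, hd⟩
      · simp [hsum X hX, hac X hX, hbd X hX, Fin.sum_univ_add]
  · exact ⟨0, Fin.elim0, fun i ↦ i.elim0, by simpa using not_fpNonzero_iff.1 hne⟩

theorem exists_equiv_of_sum_fpEq_sum {n m : ℕ} {c : Fin n → FpFunction A} {d : Fin m → FpFunction A}
    (hc : ∀ i, IsIrreducibleSubadditive A (c i)) (hd : ∀ j, IsIrreducibleSubadditive A (d j))
    (h : FpEq A (fun X _ _ ↦ ∑ i, c i X) fun X _ _ ↦ ∑ j, d j X) :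
    ∃ σ : Fin n ≃ Fin m, ∀ i, FpEq A (c i) (d (σ i)) := by
  induction n generalizing m with
  | zero =>
    cases m with
    | zero => exact ⟨Equiv.refl _, fun i ↦ i.elim0⟩
    | succ m =>
      obtain ⟨X, _, _, hX, hne⟩ := (hd 0).2.1
      have : 0 = ∑ j, d j X := by simpa using h X hX
      exact absurd (Finset.sum_eq_zero_iff.1 this.symm 0 (Finset.mem_univ 0)) hne
  | succ n ih =>
    have c_zero_isSummand : IsSummand (c 0) fun X _ _ ↦ ∑ j, d j X :=
      ⟨_, .sum fun i _ ↦ (hc i.succ).1, h.symm.trans fun _ _ _ _ ↦ Fin.sum_univ_succ _⟩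
    obtain ⟨j, -, hj⟩ := (hc 0).exists_isSummand_of_sum (fun j _ ↦ (hd j).1) c_zero_isSummand
    have c_zero_eq : FpEq A (c 0) (d j) := (hd j).fpEq_of_isSummand (hc 0).1 (hc 0).2.1 hj
    cases m with
    | zero => exact j.elim0
    | succ m =>
      have tail_eq : FpEq A (fun X _ _ ↦ ∑ i : Fin n, c i.succ X)
          fun X _ _ ↦ ∑ k, d (j.succAbove k) X := by
        intro X _ _ hX
        have hsum := h X hX
        simp only [Fin.sum_univ_succ (fun i ↦ c i X), Fin.sum_univ_succAbove (fun k ↦ d k X) j,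
          c_zero_eq X hX] at hsum
        exact Nat.add_left_cancel hsum
      obtain ⟨σ, hσ⟩ := ih (fun i ↦ hc i.succ) (fun k ↦ hd (j.succAbove k)) tail_eq
      refine ⟨(finSuccEquiv n).trans (σ.optionCongr.trans (finSuccEquiv' j).symm), fun i ↦ ?_⟩
      cases i using Fin.cases with
      | zero => simpa using c_zero_eq
      | succ i => simpa using hσ i

end Decomposition

end Summand

theorem statement17_general (A : Type) [Ring A] (χ : FpFunction A) (hχ : IsSubadditive A χ)
    (hne : FpNonzero A χ) :
    (∃ (n : ℕ) (_ : 0 < n) (c : Fin n → FpFunction A),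
      (∀ i, IsIrreducibleSubadditive A (c i)) ∧
      FpEq A χ (fun X _ _ ↦ ∑ i, c i X)) ∧
    (∀ (n m : ℕ) (c : Fin n → FpFunction A) (d : Fin m → FpFunction A),
      (∀ i, IsIrreducibleSubadditive A (c i)) →
      (∀ j, IsIrreducibleSubadditive A (d j)) →
      FpEq A χ (fun X _ _ ↦ ∑ i, c i X) →
      FpEq A χ (fun X _ _ ↦ ∑ j, d j X) →
      ∃ σ : Fin n ≃ Fin m, ∀ i, FpEq A (c i) (d (σ i))) := by
  refine ⟨?_, fun n m c d hc hd hχc hχd ↦ exists_equiv_of_sum_fpEq_sum hc hd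
    (hχc.symm.trans hχd)⟩
  obtain ⟨n, c, hc, hχc⟩ := hχ.exists_irreducible_decomposition
  refine ⟨n, Nat.pos_of_ne_zero ?_, c, hc, hχc⟩
  rintro rfl
  exact not_fpNonzero_iff.2 (by simpa using hχc) hne

/-- If the finitely presented `A`-modules form an abelian category, then
every non-zero subadditive function is a finite sum of irreducible subadditive functions,
uniquely up to reordering. -/
theorem statement17 (A : Type) [Ring A] (hA : FpAbelian A)
    (χ : (X : Type) → [AddCommGroup X] → [Module A X] → ℕ)
    (hχ : IsSubadditive A χ) (hne : FpNonzero A χ) :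
    (∃ (n : ℕ) (_ : 0 < n) (c : Fin n → (X : Type) → [AddCommGroup X] → [Module A X] → ℕ),
      (∀ i, IsIrreducibleSubadditive A (c i)) ∧
      FpEq A χ (fun X _ _ => ∑ i, c i X)) ∧
    (∀ (n m : ℕ) (c : Fin n → (X : Type) → [AddCommGroup X] → [Module A X] → ℕ)
        (d : Fin m → (X : Type) → [AddCommGroup X] → [Module A X] → ℕ),
      (∀ i, IsIrreducibleSubadditive A (c i)) →
      (∀ j, IsIrreducibleSubadditive A (d j)) →
      FpEq A χ (fun X _ _ => ∑ i, c i X) →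
      FpEq A χ (fun X _ _ => ∑ j, d j X) →
      ∃ σ : Fin n ≃ Fin m, ∀ i, FpEq A (c i) (d (σ i))) :=
  statement17_general A χ hχ hne
end

section
/- Let A be a ring and M an endofinite A-module. Then χ_{M ⊕ M} = χ_M; that is, for every finitely presented A-module X, the composition length of Hom_A(X, M ⊕ M) over End_A(M ⊕ M) equals the composition length of Hom_A(X, M) over End_A(M). -/
/-!
The submodules of `Hom(X, M)` over `End M` can be compared with those of `Hom(X, N)` over `End N`
by testing a map `X → N` on its composites with all maps `N → M`. If `M` is a direct summand of a
finite power of `N`, then `id_M` is a finite sum of composites `M → N → M`, so transferring a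
submodule to `N` and back returns it. When this holds in both directions, as for `M` and `M ⊕ M`,
the two lattices of submodules are isomorphic and the lengths agree.
-/

section Transfer

variable {A M N X : Type*} [Semiring A] [AddCommMonoid M] [Module A M] [AddCommMonoid N]
  [Module A N] [AddCommMonoid X] [Module A X]

variable (A M N) in
/-- `M` lies in the additive closure of `N`: it is a retract of `Nⁿ` for some natural number `n`,
which over a ring means that it is isomorphic to a direct summand of `Nⁿ`. -/
def IsSummandOfPower : Prop :=
  ∃ (n : ℕ) (i : M →ₗ[A] Fin n → N) (p : (Fin n → N) →ₗ[A] M), p ∘ₗ i = LinearMap.id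

theorem isSummandOfPower_prod_right : IsSummandOfPower A M (M × N) :=
  ⟨1, LinearMap.pi fun _ ↦ LinearMap.inl A M N, LinearMap.fst A M N ∘ₗ LinearMap.proj 0, rfl⟩

theorem isSummandOfPower_prod_self_left : IsSummandOfPower A (M × M) M :=
  ⟨2, (LinearEquiv.finTwoArrow A M).symm, LinearEquiv.finTwoArrow A M,
    (LinearEquiv.finTwoArrow A M).comp_symm⟩

theorem IsSummandOfPower.exists_sum_comp_eq_id (h : IsSummandOfPower A M N) :
    ∃ (n : ℕ) (i : Fin n → M →ₗ[A] N) (p : Fin n → N →ₗ[A] M),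
      ∑ k, p k ∘ₗ i k = LinearMap.id := by
  obtain ⟨n, i, p, hpi⟩ := h
  refine ⟨n, fun k ↦ LinearMap.proj k ∘ₗ i, fun k ↦ p ∘ₗ LinearMap.single A (fun _ ↦ N) k, ?_⟩
  rw [← hpi]
  ext m
  simp [← map_sum, Finset.univ_sum_single]

variable (N) in
/-- The maps `X → N` all of whose composites with maps `N → M` lie in the `End M`-submodule `S` of
`Hom(X, M)`, as an `End N`-submodule of `Hom(X, N)`. -/
def homTransfer (S : Submodule (Module.End A M) (X →ₗ[A] M)) :
    Submodule (Module.End A N) (X →ₗ[A] N) where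
  carrier := {g | ∀ p : N →ₗ[A] M, p ∘ₗ g ∈ S}
  zero_mem' p := by simp only [LinearMap.comp_zero, zero_mem]
  add_mem' hf hg p := by
    rw [LinearMap.comp_add]
    exact S.add_mem (hf p) (hg p)
  smul_mem' e _ hg p := hg (p ∘ₗ e)

theorem mem_homTransfer {S : Submodule (Module.End A M) (X →ₗ[A] M)} {g : X →ₗ[A] N} :
    g ∈ homTransfer N S ↔ ∀ p : N →ₗ[A] M, p ∘ₗ g ∈ S :=
  Iff.rfl

theorem homTransfer_mono :
    Monotone (homTransfer N : Submodule (Module.End A M) (X →ₗ[A] M) → _) :=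
  fun _ _ hST _ hg p ↦ hST (hg p)

theorem le_homTransfer_homTransfer (S : Submodule (Module.End A M) (X →ₗ[A] M)) :
    S ≤ homTransfer M (homTransfer N S) :=
  fun _ hf i p ↦ S.smul_mem (p ∘ₗ i : Module.End A M) hf

theorem homTransfer_homTransfer (h : IsSummandOfPower A M N)
    (S : Submodule (Module.End A M) (X →ₗ[A] M)) :
    homTransfer M (homTransfer N S) = S := by
  refine le_antisymm (fun f hf ↦ ?_) (le_homTransfer_homTransfer S)
  obtain ⟨n, i, p, hpi⟩ := h.exists_sum_comp_eq_id
  have hf_eq_sum : f = ∑ k, p k ∘ₗ i k ∘ₗ f := by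
    ext x
    simpa using (LinearMap.congr_fun hpi (f x)).symm
  rw [hf_eq_sum]
  exact S.sum_mem fun k _ ↦ mem_homTransfer.mp (mem_homTransfer.mp hf (i k)) (p k)

variable (X) in
/-- Transfer as an isomorphism between the lattices of submodules of `Hom(X, M)` over `End M` and
of `Hom(X, N)` over `End N`, for `M` and `N` with the same additive closure. -/
def homTransferOrderIso (hMN : IsSummandOfPower A M N) (hNM : IsSummandOfPower A N M) :
    Submodule (Module.End A M) (X →ₗ[A] M) ≃o Submodule (Module.End A N) (X →ₗ[A] N) :=
  Equiv.toOrderIso ⟨homTransfer N, homTransfer M, homTransfer_homTransfer hMN,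
    homTransfer_homTransfer hNM⟩ homTransfer_mono homTransfer_mono

end Transfer

theorem length_eq_of_submodule_orderIso {R S M N : Type*} [Ring R] [AddCommGroup M]
    [Module R M] [Ring S] [AddCommGroup N] [Module S N] (e : Submodule R M ≃o Submodule S N) :
    Module.length R M = Module.length S N := by
  rw [← WithBot.coe_inj, Module.coe_length, Module.coe_length, Order.krullDim_eq_of_orderIso e]

theorem compLength_eq_toNat_length (R : Type) [Ring R] (M : Type) [AddCommGroup M] [Module R M] :
    compLength R M = (Module.length R M).toNat := by
  unfold compLength
  split_ifs with h
  · rw [← Module.length_compositionSeries _ h.choose_spec.1 h.choose_spec.2, ENat.toNat_natCast]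
  · have h_top : Module.length R M = ⊤ := by
      rwa [← isFiniteLength_iff_exists_compositionSeries, ← Module.length_ne_top_iff,
        not_not] at h
    rw [h_top, ENat.toNat_top]

theorem statement19_general {A M N : Type*} [Ring A] [AddCommGroup M] [Module A M]
    [AddCommGroup N] [Module A N] (hMN : IsSummandOfPower A M N) (hNM : IsSummandOfPower A N M)
    (X : Type*) [AddCommGroup X] [Module A X] :
    Module.length (Module.End A M) (X →ₗ[A] M) = Module.length (Module.End A N) (X →ₗ[A] N) :=
  length_eq_of_submodule_orderIso (homTransferOrderIso X hMN hNM)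

/-- For an endofinite `A`-module `M` one has `χ_{M ⊕ M} = χ_M` on all
finitely presented `A`-modules. -/
theorem statement19 (A : Type) [Ring A] (M : Type) [AddCommGroup M] [Module A M]
    (hM : IsEndofinite A M) :
    ∀ (X : Type) [AddCommGroup X] [Module A X], Module.FinitePresentation A X →
      chiMod A (M × M) X = chiMod A M X := by
  intro X _ _ _
  rw [chiMod, chiMod, compLength_eq_toNat_length, compLength_eq_toNat_length,
    statement19_general isSummandOfPower_prod_self_left isSummandOfPower_prod_right]
end
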